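/- In a braided quantum group, the antipode twisting relations hold: σ(κ⊗id) = (id⊗κ)τσ⁻¹τ, σ(id⊗κ) = (κ⊗id)τσ⁻¹τ, τ(id⊗κ) = (κ⊗id)τ, and τ(κ⊗id) = (id⊗κ)τ, where τ is the secondary braiding. Consequently, (κ⊗κ)τ = τ(κ⊗κ) and (κ⊗κ)σ = σ(κ⊗κ). -/

import Mathlib

open TensorProduct LinearMap

noncomputable section

variable (A : Type*) [Ring A] [Algebra ℂ A]

/-- Two-fold tensor product of `A` with itself. -/
abbrev T2 := A ⊗[ℂ] A
/-- Three-fold tensor product (right associated). -/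
abbrev T3 := A ⊗[ℂ] (A ⊗[ℂ] A)
/-- Four-fold tensor product (right associated). -/
abbrev T4 := A ⊗[ℂ] (A ⊗[ℂ] (A ⊗[ℂ] A))

variable {A}

/-- The multiplication of `A` as a linear map. -/
def mA : T2 A →ₗ[ℂ] A := LinearMap.mul' ℂ A

/-- `f ⊗ id` : a map of `T2` acting on the factors 1,2 of `T3`. -/
def op12 (f : T2 A →ₗ[ℂ] T2 A) : T3 A →ₗ[ℂ] T3 A :=
  (TensorProduct.assoc ℂ A A A).toLinearMap ∘ₗ f.rTensor A ∘ₗ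
    (TensorProduct.assoc ℂ A A A).symm.toLinearMap

/-- `id ⊗ f` : a map of `T2` acting on the factors 2,3 of `T3`. -/
def op23 (f : T2 A →ₗ[ℂ] T2 A) : T3 A →ₗ[ℂ] T3 A := f.lTensor A

/-- `f ⊗ id ⊗ id` : a map of `T2` acting on the factors 1,2 of `T4`. -/
def op12_4 (f : T2 A →ₗ[ℂ] T2 A) : T4 A →ₗ[ℂ] T4 A :=
  (TensorProduct.assoc ℂ A A (T2 A)).toLinearMap ∘ₗ f.rTensor (T2 A) ∘ₗ
    (TensorProduct.assoc ℂ A A (T2 A)).symm.toLinearMap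

/-- `id ⊗ f ⊗ id` : a map of `T2` acting on the factors 2,3 of `T4`. -/
def op23_4 (f : T2 A →ₗ[ℂ] T2 A) : T4 A →ₗ[ℂ] T4 A := (op12 f).lTensor A

/-- `id ⊗ id ⊗ f` : a map of `T2` acting on the factors 3,4 of `T4`. -/
def op34_4 (f : T2 A →ₗ[ℂ] T2 A) : T4 A →ₗ[ℂ] T4 A := (f.lTensor A).lTensor A

/-- `m ⊗ id : T3 → T2`. -/
def m12 : T3 A →ₗ[ℂ] T2 A :=
  (mA (A := A)).rTensor A ∘ₗ (TensorProduct.assoc ℂ A A A).symm.toLinearMap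

/-- `id ⊗ m : T3 → T2`. -/
def m23 : T3 A →ₗ[ℂ] T2 A := (mA (A := A)).lTensor A

/-- `m ⊗ m : T4 → T2`. -/
def mm : T4 A →ₗ[ℂ] T2 A := m12 ∘ₗ ((mA (A := A)).lTensor A).lTensor A

/-- A braided quantum group structure on the algebra `A` (Đurđević).
`φ` is the coproduct, `ε` the counit, `κ` the antipode, `σ` the braiding
(with given inverse `σ'`). -/
structure BQG (A : Type*) [Ring A] [Algebra ℂ A] where
  φ : A →ₗ[ℂ] T2 A
  ε : A →ₗ[ℂ] ℂ
  κ : A →ₗ[ℂ] A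
  σ : T2 A →ₗ[ℂ] T2 A
  σ' : T2 A →ₗ[ℂ] T2 A
  σ_comp : σ ∘ₗ σ' = LinearMap.id
  comp_σ : σ' ∘ₗ σ = LinearMap.id
  κ_bij : Function.Bijective κ
  /-- coassociativity `(φ⊗id)φ = (id⊗φ)φ` -/
  coassoc : (TensorProduct.assoc ℂ A A A).toLinearMap ∘ₗ φ.rTensor A ∘ₗ φ = φ.lTensor A ∘ₗ φ
  /-- `(ε⊗id)φ = id` -/
  counit_left : (TensorProduct.lid ℂ A).toLinearMap ∘ₗ ε.rTensor A ∘ₗ φ = LinearMap.id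
  /-- `(id⊗ε)φ = id` -/
  counit_right : (TensorProduct.rid ℂ A).toLinearMap ∘ₗ ε.lTensor A ∘ₗ φ = LinearMap.id
  /-- `σ(m⊗id) = (id⊗m)(σ⊗id)(id⊗σ)` -/
  braid_mul_left : σ ∘ₗ m12 = m23 ∘ₗ op12 σ ∘ₗ op23 σ
  /-- `σ(id⊗m) = (m⊗id)(id⊗σ)(σ⊗id)` -/
  braid_mul_right : σ ∘ₗ m23 = m12 ∘ₗ op23 σ ∘ₗ op12 σ
  /-- `φm = (m⊗m)(id⊗σ⊗id)(φ⊗φ)` -/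
  comul_mul : φ ∘ₗ mA = mm ∘ₗ op23_4 σ ∘ₗ
      (TensorProduct.assoc ℂ A A (T2 A)).toLinearMap ∘ₗ φ.rTensor (T2 A) ∘ₗ φ.lTensor A
  /-- `(σ⊗id²)(id⊗φ⊗id)(σ⁻¹⊗id)(id⊗φ) = (id²⊗σ)(id⊗φ⊗id)(id⊗σ⁻¹)(φ⊗id)` -/
  mixed_coassoc :
    op12_4 σ ∘ₗ ((TensorProduct.assoc ℂ A A A).toLinearMap ∘ₗ φ.rTensor A).lTensor A ∘ₗ
        op12 σ' ∘ₗ φ.lTensor A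
      = op34_4 σ ∘ₗ ((TensorProduct.assoc ℂ A A A).toLinearMap ∘ₗ φ.rTensor A).lTensor A ∘ₗ
        op23 σ' ∘ₗ (TensorProduct.assoc ℂ A A A).toLinearMap ∘ₗ φ.rTensor A
  /-- `m(κ⊗id)φ = 1ε` -/
  antipode_left : mA ∘ₗ κ.rTensor A ∘ₗ φ = Algebra.linearMap ℂ A ∘ₗ ε
  /-- `m(id⊗κ)φ = 1ε` -/
  antipode_right : mA ∘ₗ κ.lTensor A ∘ₗ φ = Algebra.linearMap ℂ A ∘ₗ ε

namespace BQG

variable {A : Type*} [Ring A] [Algebra ℂ A] (G : BQG A)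

/-- `φ ⊗ id : T2 → T3`. -/
def φ1 : T2 A →ₗ[ℂ] T3 A := (TensorProduct.assoc ℂ A A A).toLinearMap ∘ₗ G.φ.rTensor A

/-- `id ⊗ φ : T2 → T3`. -/
def φ2 : T2 A →ₗ[ℂ] T3 A := G.φ.lTensor A

/-- `id² ⊗ ε : T3 → T2`. -/
def ε3r : T3 A →ₗ[ℂ] T2 A :=
  ((TensorProduct.rid ℂ A).toLinearMap ∘ₗ G.ε.lTensor A).lTensor A

/-- `ε ⊗ id² : T3 → T2`. -/
def ε3l : T3 A →ₗ[ℂ] T2 A :=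
  (TensorProduct.lid ℂ (T2 A)).toLinearMap ∘ₗ G.ε.rTensor (T2 A)

/-- The secondary braiding `τ = (id²⊗ε)(id⊗σ⁻¹)(φ⊗id)σ`. -/
def τ : T2 A →ₗ[ℂ] T2 A := G.ε3r ∘ₗ op23 G.σ' ∘ₗ G.φ1 ∘ₗ G.σ

/-- `ε ⊗ ε : T2 → ℂ`. -/
def εε : T2 A →ₗ[ℂ] ℂ :=
  (TensorProduct.lid ℂ ℂ).toLinearMap ∘ₗ G.ε.rTensor ℂ ∘ₗ G.ε.lTensor A

end BQG

/-!
Every operator is made to act on the first factors of a tensor product with an arbitrary tail, so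
that an identity between operators holds at every position of a tensor power. Applying the counit
to an outer factor of the mixed coassociativity axiom expresses how the coproduct moves past `σ`,
up to a correction `τ⁻¹ := (id²⊗ε)(id⊗σ)(φ⊗id)σ⁻¹`. As the Galois map `a ⊗ b ↦ a b⁽¹⁾ ⊗ b⁽²⁾` is
invertible, this relation exhibits `id⊗τ⁻¹` as a composite of invertible maps; multiplicativity of
`φ` yields `τ⁻¹τ = id`, so `τ` is the two-sided inverse. The relations for `σ` then express
uniqueness of convolution inverses, and those for `τ` follow by pushing the coproduct through the
relations for `σ` and applying the counit.
-/

section LTensor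

variable {R P M M₁ M₂ M₃ N N₁ : Type*} [CommSemiring R]
  [AddCommMonoid P] [AddCommMonoid M] [AddCommMonoid M₁] [AddCommMonoid M₂] [AddCommMonoid M₃]
  [AddCommMonoid N] [AddCommMonoid N₁]
  [Module R P] [Module R M] [Module R M₁] [Module R M₂] [Module R M₃] [Module R N] [Module R N₁]

theorem rTensor_lTensor_comm {P' : Type*} [AddCommMonoid P'] [Module R P'] (f : P →ₗ[R] P')
    (g : M →ₗ[R] N) (x : P ⊗[R] M) :
    f.rTensor N (g.lTensor P x) = g.lTensor P' (f.rTensor M x) :=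
  LinearMap.congr_fun ((rTensor_comp_lTensor ..).trans (lTensor_comp_rTensor ..).symm) x

-- The subscripts of `lTensor_congr` count the maps composed on the two sides.

theorem lTensor_congr₂₀ {f : M₁ →ₗ[R] M} {g : M →ₗ[R] M₁} (h : ∀ x, f (g x) = x) (x : P ⊗[R] M) :
    f.lTensor P (g.lTensor P x) = x := by
  rw [← lTensor_comp_apply, show f ∘ₗ g = LinearMap.id from LinearMap.ext h, lTensor_id_apply]

theorem lTensor_congr₂₂ {f₁ : M →ₗ[R] M₁} {f₂ : M₁ →ₗ[R] N} {g₁ : M →ₗ[R] N₁} {g₂ : N₁ →ₗ[R] N}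
    (h : ∀ x, f₂ (f₁ x) = g₂ (g₁ x)) (x : P ⊗[R] M) :
    f₂.lTensor P (f₁.lTensor P x) = g₂.lTensor P (g₁.lTensor P x) := by
  simp only [← lTensor_comp_apply]
  exact LinearMap.congr_fun (congrArg _ (LinearMap.ext h)) x

theorem lTensor_congr₃₁ {f₁ : M →ₗ[R] M₁} {f₂ : M₁ →ₗ[R] M₂} {f₃ : M₂ →ₗ[R] N} {g : M →ₗ[R] N}
    (h : ∀ x, f₃ (f₂ (f₁ x)) = g x) (x : P ⊗[R] M) :
    f₃.lTensor P (f₂.lTensor P (f₁.lTensor P x)) = g.lTensor P x := by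
  simp only [← lTensor_comp_apply]
  exact LinearMap.congr_fun (congrArg _ (LinearMap.ext h)) x

theorem lTensor_congr₃₂ {f₁ : M →ₗ[R] M₁} {f₂ : M₁ →ₗ[R] M₂} {f₃ : M₂ →ₗ[R] N}
    {g₁ : M →ₗ[R] N₁} {g₂ : N₁ →ₗ[R] N}
    (h : ∀ x, f₃ (f₂ (f₁ x)) = g₂ (g₁ x)) (x : P ⊗[R] M) :
    f₃.lTensor P (f₂.lTensor P (f₁.lTensor P x)) = g₂.lTensor P (g₁.lTensor P x) := by
  rw [lTensor_congr₃₁ (g := g₂ ∘ₗ g₁) h, lTensor_comp_apply]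

theorem lTensor_congr₄₁ {f₁ : M →ₗ[R] M₁} {f₂ : M₁ →ₗ[R] M₂} {f₃ : M₂ →ₗ[R] M₃} {f₄ : M₃ →ₗ[R] N}
    {g : M →ₗ[R] N} (h : ∀ x, f₄ (f₃ (f₂ (f₁ x))) = g x) (x : P ⊗[R] M) :
    f₄.lTensor P (f₃.lTensor P (f₂.lTensor P (f₁.lTensor P x))) = g.lTensor P x := by
  simp only [← lTensor_comp_apply]
  exact LinearMap.congr_fun (congrArg _ (LinearMap.ext h)) x

theorem lTensor_congr₄₂ {f₁ : M →ₗ[R] M₁} {f₂ : M₁ →ₗ[R] M₂} {f₃ : M₂ →ₗ[R] M₃} {f₄ : M₃ →ₗ[R] N}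
    {g₁ : M →ₗ[R] N₁} {g₂ : N₁ →ₗ[R] N}
    (h : ∀ x, f₄ (f₃ (f₂ (f₁ x))) = g₂ (g₁ x)) (x : P ⊗[R] M) :
    f₄.lTensor P (f₃.lTensor P (f₂.lTensor P (f₁.lTensor P x))) =
      g₂.lTensor P (g₁.lTensor P x) := by
  rw [lTensor_congr₄₁ (g := g₂ ∘ₗ g₁) h, lTensor_comp_apply]

end LTensor

namespace BQG

variable {A : Type*} [Ring A] [Algebra ℂ A] {M N : Type*} [AddCommMonoid M] [Module ℂ M]
  [AddCommMonoid N] [Module ℂ N]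

/-- `f ⊗ id` on `A ⊗ A ⊗ M`. All operators are given an arbitrary tail `M`, so that an identity
between them may be used at any position of a tensor power, by applying `𝟙⊗`. -/
def act₁₂ (f : T2 A →ₗ[ℂ] T2 A) : A ⊗[ℂ] (A ⊗[ℂ] M) →ₗ[ℂ] A ⊗[ℂ] (A ⊗[ℂ] M) :=
  (TensorProduct.assoc ℂ A A M).toLinearMap ∘ₗ f.rTensor M ∘ₗ
    (TensorProduct.assoc ℂ A A M).symm.toLinearMap

/-- The multiplication `m ⊗ id` of the first two factors of `A ⊗ A ⊗ M`. -/
def mul₁₂ : A ⊗[ℂ] (A ⊗[ℂ] M) →ₗ[ℂ] A ⊗[ℂ] M :=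
  (mA (A := A)).rTensor M ∘ₗ (TensorProduct.assoc ℂ A A M).symm.toLinearMap

/-- The coproduct `φ ⊗ id` of the first factor of `A ⊗ M`. -/
def comul₁ (G : BQG A) : A ⊗[ℂ] M →ₗ[ℂ] A ⊗[ℂ] (A ⊗[ℂ] M) :=
  (TensorProduct.assoc ℂ A A M).toLinearMap ∘ₗ G.φ.rTensor M

/-- The counit `ε ⊗ id` of the first factor of `A ⊗ M`. -/
def counit₁ (G : BQG A) : A ⊗[ℂ] M →ₗ[ℂ] M :=
  (TensorProduct.lid ℂ M).toLinearMap ∘ₗ G.ε.rTensor M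

/-- The map `a ↦ a ⊗ m`, through which the axioms of `BQG` acquire a tail. -/
def appendTail (m : M) : A →ₗ[ℂ] A ⊗[ℂ] M := (TensorProduct.mk ℂ A M).flip m

/-- `(id²⊗ε)(id⊗σ)(φ⊗id)σ⁻¹`, which will turn out to be the inverse of the secondary braiding. -/
def τInv (G : BQG A) : T2 A →ₗ[ℂ] T2 A := G.ε3r ∘ₗ op23 G.σ ∘ₗ G.φ1 ∘ₗ G.σ'

variable (G : BQG A)

local prefix:max "𝟙⊗" => LinearMap.lTensor A
local notation "m₁₂" => mul₁₂
local notation "η₁" => TensorProduct.mk ℂ A _ 1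
local notation "φ₁" => comul₁ G
local notation "ε₁" => counit₁ G
local notation "κ₁" => LinearMap.rTensor _ (BQG.κ G)
local notation "σ₁₂" => act₁₂ (BQG.σ G)
local notation "τ₁₂" => act₁₂ (BQG.τ G)
local notation "τ⁻¹₁₂" => act₁₂ (BQG.τInv G)
local notation "σ⁻¹₁₂" => act₁₂ (BQG.σ' G)

@[simp] theorem appendTail_apply (m : M) (a : A) : appendTail m a = a ⊗ₜ[ℂ] m := rfl

@[simp] theorem mul₁₂_tmul (a b : A) (m : M) : m₁₂ (a ⊗ₜ[ℂ] (b ⊗ₜ[ℂ] m)) = (a * b) ⊗ₜ m := by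
  simp [mul₁₂, mA]

@[simp] theorem counit₁_tmul (a : A) (m : M) : ε₁ (a ⊗ₜ[ℂ] m) = G.ε a • m := by
  simp [counit₁]

theorem assoc_tmul (t : T2 A) (m : M) :
    TensorProduct.assoc ℂ A A M (t ⊗ₜ m) = 𝟙⊗(appendTail m) t := by
  induction t using TensorProduct.induction_on with
  | zero => simp
  | tmul a b => simp
  | add s t hs ht => simp only [TensorProduct.add_tmul, map_add, hs, ht]

/-! ### Naturality in the tail -/

theorem assoc_lTensor (h : M →ₗ[ℂ] N) (x : T2 A ⊗[ℂ] M) :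
    TensorProduct.assoc ℂ A A N (h.lTensor (T2 A) x) =
      𝟙⊗(𝟙⊗h) (TensorProduct.assoc ℂ A A M x) := by
  simp [lTensor_tensor]

theorem act₁₂_lTensor_lTensor (f : T2 A →ₗ[ℂ] T2 A) (h : M →ₗ[ℂ] N) (x : A ⊗[ℂ] (A ⊗[ℂ] M)) :
    act₁₂ f (𝟙⊗(𝟙⊗h) x) = 𝟙⊗(𝟙⊗h) (act₁₂ f x) := by
  obtain ⟨y, rfl⟩ := (TensorProduct.assoc ℂ A A M).surjective x
  rw [← assoc_lTensor]
  simp only [act₁₂, comp_apply, LinearEquiv.coe_coe, LinearEquiv.symm_apply_apply,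
    rTensor_lTensor_comm]
  exact assoc_lTensor h _

theorem comul₁_lTensor (h : M →ₗ[ℂ] N) (x : A ⊗[ℂ] M) : φ₁ (𝟙⊗h x) = 𝟙⊗(𝟙⊗h) (φ₁ x) := by
  simp [comul₁, rTensor_lTensor_comm, assoc_lTensor]

theorem counit₁_lTensor (h : M →ₗ[ℂ] N) (x : A ⊗[ℂ] M) : ε₁ (𝟙⊗h x) = h (ε₁ x) := by
  have : ε₁ ∘ₗ 𝟙⊗h = h ∘ₗ ε₁ := by ext; simp
  exact LinearMap.congr_fun this x

theorem mul₁₂_lTensor_lTensor (h : M →ₗ[ℂ] N) (x : A ⊗[ℂ] (A ⊗[ℂ] M)) :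
    m₁₂ (𝟙⊗(𝟙⊗h) x) = 𝟙⊗h (m₁₂ x) := by
  have : m₁₂ ∘ₗ 𝟙⊗(𝟙⊗h) = 𝟙⊗h ∘ₗ m₁₂ := by ext; simp
  exact LinearMap.congr_fun this x

theorem unit_apply (h : M →ₗ[ℂ] N) (x : M) : η₁ (h x) = 𝟙⊗h (η₁ x) := rfl

/-! ### Appending a tail -/

theorem act₁₂_appendTail (f : T2 A →ₗ[ℂ] T2 A) (m : M) (t : T2 A) :
    act₁₂ f (𝟙⊗(appendTail m) t) = 𝟙⊗(appendTail m) (f t) := by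
  rw [← assoc_tmul, ← assoc_tmul]
  simp [act₁₂]

theorem comul₁_appendTail (m : M) (a : A) : φ₁ (appendTail m a) = 𝟙⊗(appendTail m) (G.φ a) := by
  rw [← assoc_tmul]
  simp [comul₁]

theorem mul₁₂_appendTail (m : M) (t : T2 A) : m₁₂ (𝟙⊗(appendTail m) t) = appendTail m (mA t) := by
  have : m₁₂ ∘ₗ 𝟙⊗(appendTail m) = appendTail m ∘ₗ mA := by ext; simp [mA]
  exact LinearMap.congr_fun this t

theorem lTensor_counit₁_appendTail (m : M) (t : T2 A) :
    𝟙⊗ε₁ (𝟙⊗(appendTail m) t) = appendTail m (TensorProduct.rid ℂ A (G.ε.lTensor A t)) := by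
  have : 𝟙⊗ε₁ ∘ₗ 𝟙⊗(appendTail m) =
      appendTail m ∘ₗ (TensorProduct.rid ℂ A).toLinearMap ∘ₗ G.ε.lTensor A := by
    ext; simp
  exact LinearMap.congr_fun this t

theorem antipode_appendTail (m : M) (a : A) : κ₁ (appendTail m a) = appendTail m (G.κ a) := rfl

theorem antipode_lTensor_appendTail (m : M) (t : T2 A) :
    κ₁ (𝟙⊗(appendTail m) t) = 𝟙⊗(appendTail m) (G.κ.rTensor A t) :=
  rTensor_lTensor_comm _ _ t

theorem lTensor_antipode_lTensor_appendTail (m : M) (t : T2 A) :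
    𝟙⊗κ₁ (𝟙⊗(appendTail m) t) = 𝟙⊗(appendTail m) (G.κ.lTensor A t) :=
  lTensor_congr₂₂ (antipode_appendTail G m) t

theorem ext_appendTail₁ {f g : A ⊗[ℂ] M →ₗ[ℂ] N}
    (h : ∀ (m : M) (a : A), f (appendTail m a) = g (appendTail m a)) (x) : f x = g x :=
  LinearMap.congr_fun (TensorProduct.ext' fun a m => h m a) x

theorem ext_appendTail₂ {f g : A ⊗[ℂ] (A ⊗[ℂ] M) →ₗ[ℂ] N}
    (h : ∀ (m : M) (t : T2 A), f (𝟙⊗(appendTail m) t) = g (𝟙⊗(appendTail m) t)) (x) :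
    f x = g x := by
  refine LinearMap.congr_fun ?_ x
  ext a b m
  exact h m (a ⊗ₜ b)

theorem ext_appendTail₃ {f g : A ⊗[ℂ] (A ⊗[ℂ] (A ⊗[ℂ] M)) →ₗ[ℂ] N}
    (h : ∀ (m : M) (t : T3 A), f (𝟙⊗(𝟙⊗(appendTail m)) t) = g (𝟙⊗(𝟙⊗(appendTail m)) t)) (x) :
    f x = g x := by
  refine LinearMap.congr_fun ?_ x
  ext a b c m
  exact h m (a ⊗ₜ (b ⊗ₜ c))

/-! ### The axioms with a tail -/

theorem act₁₂_cancel {f g : T2 A →ₗ[ℂ] T2 A} (h : f ∘ₗ g = LinearMap.id)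
    (x : A ⊗[ℂ] (A ⊗[ℂ] M)) : act₁₂ f (act₁₂ g x) = x := by
  refine ext_appendTail₂ (f := act₁₂ f ∘ₗ act₁₂ g) (g := LinearMap.id) (fun m t => ?_) x
  simp only [comp_apply, act₁₂_appendTail, id_apply]
  exact congrArg _ (LinearMap.congr_fun h t)

theorem σ₁₂_σInv₁₂ (x : A ⊗[ℂ] (A ⊗[ℂ] M)) : σ₁₂ (σ⁻¹₁₂ x) = x := act₁₂_cancel G.σ_comp x

theorem σInv₁₂_σ₁₂ (x : A ⊗[ℂ] (A ⊗[ℂ] M)) : σ⁻¹₁₂ (σ₁₂ x) = x := act₁₂_cancel G.comp_σ x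

theorem comul₁_comul₁ (x : A ⊗[ℂ] M) : φ₁ (φ₁ x) = 𝟙⊗φ₁ (φ₁ x) := by
  refine ext_appendTail₁ (f := φ₁ ∘ₗ φ₁) (g := 𝟙⊗φ₁ ∘ₗ φ₁) (fun m a => ?_) x
  simp only [comp_apply, comul₁_appendTail, comul₁_lTensor,
    lTensor_congr₂₂ (comul₁_appendTail G m)]
  exact congrArg _ (LinearMap.congr_fun G.coassoc a)

theorem counit₁_comul₁ (x : A ⊗[ℂ] M) : ε₁ (φ₁ x) = x := by
  refine ext_appendTail₁ (f := ε₁ ∘ₗ φ₁) (g := LinearMap.id) (fun m a => ?_) x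
  simp only [comp_apply, comul₁_appendTail, counit₁_lTensor]
  exact congrArg _ (LinearMap.congr_fun G.counit_left a)

theorem lTensor_counit₁_comul₁ (x : A ⊗[ℂ] M) : 𝟙⊗ε₁ (φ₁ x) = x := by
  refine ext_appendTail₁ (f := 𝟙⊗ε₁ ∘ₗ φ₁) (g := LinearMap.id) (fun m a => ?_) x
  simp only [comp_apply, comul₁_appendTail, lTensor_counit₁_appendTail]
  exact congrArg _ (LinearMap.congr_fun G.counit_right a)

theorem σ₁₂_mul₁₂ (x : A ⊗[ℂ] (A ⊗[ℂ] (A ⊗[ℂ] M))) :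
    σ₁₂ (m₁₂ x) = 𝟙⊗m₁₂ (σ₁₂ (𝟙⊗σ₁₂ x)) := by
  refine ext_appendTail₃ (f := σ₁₂ ∘ₗ m₁₂) (g := 𝟙⊗m₁₂ ∘ₗ σ₁₂ ∘ₗ 𝟙⊗σ₁₂) (fun m t => ?_) x
  simp only [comp_apply, mul₁₂_lTensor_lTensor, act₁₂_lTensor_lTensor, act₁₂_appendTail,
    lTensor_congr₂₂ (act₁₂_appendTail _ m), lTensor_congr₂₂ (mul₁₂_appendTail m)]
  exact congrArg _ (LinearMap.congr_fun G.braid_mul_left t)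

theorem σ₁₂_lTensor_mul₁₂ (x : A ⊗[ℂ] (A ⊗[ℂ] (A ⊗[ℂ] M))) :
    σ₁₂ (𝟙⊗m₁₂ x) = m₁₂ (𝟙⊗σ₁₂ (σ₁₂ x)) := by
  refine ext_appendTail₃ (f := σ₁₂ ∘ₗ 𝟙⊗m₁₂) (g := m₁₂ ∘ₗ 𝟙⊗σ₁₂ ∘ₗ σ₁₂) (fun m t => ?_) x
  simp only [comp_apply, mul₁₂_lTensor_lTensor, act₁₂_lTensor_lTensor, act₁₂_appendTail,
    lTensor_congr₂₂ (act₁₂_appendTail _ m), lTensor_congr₂₂ (mul₁₂_appendTail m)]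
  exact congrArg _ (LinearMap.congr_fun G.braid_mul_right t)

theorem comul₁_mul₁₂ (x : A ⊗[ℂ] (A ⊗[ℂ] M)) :
    φ₁ (m₁₂ x) = m₁₂ (𝟙⊗(𝟙⊗m₁₂) (𝟙⊗σ₁₂ (φ₁ (𝟙⊗φ₁ x)))) := by
  refine ext_appendTail₂ (f := φ₁ ∘ₗ m₁₂) (g := m₁₂ ∘ₗ 𝟙⊗(𝟙⊗m₁₂) ∘ₗ 𝟙⊗σ₁₂ ∘ₗ φ₁ ∘ₗ 𝟙⊗φ₁)
    (fun m t => ?_) x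
  simp only [comp_apply, mul₁₂_appendTail, comul₁_appendTail,
    comul₁_lTensor G (𝟙⊗(appendTail m)), lTensor_congr₂₂ (comul₁_appendTail G m),
    lTensor_congr₂₂ (act₁₂_lTensor_lTensor G.σ (appendTail m)),
    lTensor_congr₂₂ (lTensor_congr₂₂ (mul₁₂_appendTail m)), mul₁₂_lTensor_lTensor (appendTail m)]
  exact congrArg _ (LinearMap.congr_fun G.comul_mul t)

theorem σ₁₂_lTensor_comul₁_σInv₁₂_lTensor_comul₁ (x : A ⊗[ℂ] (A ⊗[ℂ] M)) :
    σ₁₂ (𝟙⊗φ₁ (σ⁻¹₁₂ (𝟙⊗φ₁ x))) = 𝟙⊗(𝟙⊗σ₁₂) (𝟙⊗φ₁ (𝟙⊗σ⁻¹₁₂ (φ₁ x))) := by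
  refine ext_appendTail₂ (f := σ₁₂ ∘ₗ 𝟙⊗φ₁ ∘ₗ σ⁻¹₁₂ ∘ₗ 𝟙⊗φ₁)
    (g := 𝟙⊗(𝟙⊗σ₁₂) ∘ₗ 𝟙⊗φ₁ ∘ₗ 𝟙⊗σ⁻¹₁₂ ∘ₗ φ₁) (fun m t => ?_) x
  simp only [comp_apply, comul₁_lTensor, act₁₂_lTensor_lTensor,
    lTensor_congr₂₂ (comul₁_appendTail G m),
    lTensor_congr₂₂ (comul₁_lTensor G (appendTail m)),
    lTensor_congr₂₂ (act₁₂_appendTail _ m),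
    lTensor_congr₂₂ (lTensor_congr₂₂ (act₁₂_appendTail _ m))]
  exact congrArg _ (LinearMap.congr_fun G.mixed_coassoc t)

theorem mul₁₂_antipode_comul₁ (x : A ⊗[ℂ] M) : m₁₂ (κ₁ (φ₁ x)) = η₁ (ε₁ x) := by
  refine ext_appendTail₁ (f := m₁₂ ∘ₗ κ₁ ∘ₗ φ₁) (g := η₁ ∘ₗ ε₁) (fun m a => ?_) x
  simp only [comp_apply, comul₁_appendTail, antipode_lTensor_appendTail, mul₁₂_appendTail]
  rw [show mA (G.κ.rTensor A (G.φ a)) = _ from LinearMap.congr_fun G.antipode_left a]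
  simp [Algebra.algebraMap_eq_smul_one]

theorem mul₁₂_lTensor_antipode_comul₁ (x : A ⊗[ℂ] M) :
    m₁₂ (𝟙⊗κ₁ (φ₁ x)) = η₁ (ε₁ x) := by
  refine ext_appendTail₁ (f := m₁₂ ∘ₗ 𝟙⊗κ₁ ∘ₗ φ₁) (g := η₁ ∘ₗ ε₁) (fun m a => ?_) x
  simp only [comp_apply, comul₁_appendTail, lTensor_antipode_lTensor_appendTail, mul₁₂_appendTail]
  rw [show mA (G.κ.lTensor A (G.φ a)) = _ from LinearMap.congr_fun G.antipode_right a]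
  simp [Algebra.algebraMap_eq_smul_one]

theorem mul₁₂_mul₁₂ (x : A ⊗[ℂ] (A ⊗[ℂ] (A ⊗[ℂ] M))) : m₁₂ (m₁₂ x) = m₁₂ (𝟙⊗m₁₂ x) := by
  have : mul₁₂ (A := A) (M := M) ∘ₗ m₁₂ = m₁₂ ∘ₗ 𝟙⊗m₁₂ := by ext; simp [mul_assoc]
  exact LinearMap.congr_fun this x

theorem mul₁₂_unit (x : A ⊗[ℂ] M) : m₁₂ (η₁ x) = x := by
  have : mul₁₂ (A := A) (M := M) ∘ₗ η₁ = LinearMap.id := by ext; simp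
  exact LinearMap.congr_fun this x

theorem mul₁₂_lTensor_unit (x : A ⊗[ℂ] M) : m₁₂ (𝟙⊗η₁ x) = x := by
  have : mul₁₂ (A := A) (M := M) ∘ₗ 𝟙⊗η₁ = LinearMap.id := by ext; simp
  exact LinearMap.congr_fun this x

theorem τ₁₂_apply (x : A ⊗[ℂ] (A ⊗[ℂ] M)) :
    τ₁₂ x = 𝟙⊗(𝟙⊗ε₁) (𝟙⊗σ⁻¹₁₂ (φ₁ (σ₁₂ x))) := by
  refine ext_appendTail₂ (f := τ₁₂) (g := 𝟙⊗(𝟙⊗ε₁) ∘ₗ 𝟙⊗σ⁻¹₁₂ ∘ₗ φ₁ ∘ₗ σ₁₂) (fun m t => ?_) x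
  simp only [comp_apply, act₁₂_appendTail, comul₁_lTensor, lTensor_congr₂₂ (act₁₂_appendTail _ m)]
  exact (lTensor_congr₂₂ (g₁ := _ ∘ₗ _) (lTensor_counit₁_appendTail G m) _).symm

theorem τInv₁₂_apply (x : A ⊗[ℂ] (A ⊗[ℂ] M)) :
    τ⁻¹₁₂ x = 𝟙⊗(𝟙⊗ε₁) (𝟙⊗σ₁₂ (φ₁ (σ⁻¹₁₂ x))) := by
  refine ext_appendTail₂ (f := τ⁻¹₁₂) (g := 𝟙⊗(𝟙⊗ε₁) ∘ₗ 𝟙⊗σ₁₂ ∘ₗ φ₁ ∘ₗ σ⁻¹₁₂) (fun m t => ?_) x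
  simp only [comp_apply, act₁₂_appendTail, comul₁_lTensor, lTensor_congr₂₂ (act₁₂_appendTail _ m)]
  exact (lTensor_congr₂₂ (g₁ := _ ∘ₗ _) (lTensor_counit₁_appendTail G m) _).symm

/-! ### Relations between the coproduct, the braiding and `τ⁻¹` -/

theorem σ₁₂_unit (x : A ⊗[ℂ] M) : σ₁₂ (η₁ x) = 𝟙⊗η₁ x := by
  have lTensor_mul₁₂_σ₁₂_unit (z : A ⊗[ℂ] (A ⊗[ℂ] M)) : 𝟙⊗m₁₂ (σ₁₂ (η₁ z)) = z := by
    have h := σ₁₂_mul₁₂ G (η₁ (σ⁻¹₁₂ z))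
    rwa [mul₁₂_unit, σ₁₂_σInv₁₂, ← unit_apply, σ₁₂_σInv₁₂, eq_comm] at h
  have h := lTensor_mul₁₂_σ₁₂_unit (𝟙⊗η₁ x)
  rwa [unit_apply (𝟙⊗η₁) x, act₁₂_lTensor_lTensor, lTensor_congr₂₀ mul₁₂_lTensor_unit] at h

theorem σ₁₂_lTensor_unit (x : A ⊗[ℂ] M) : σ₁₂ (𝟙⊗η₁ x) = η₁ x := by
  have h := σ₁₂_lTensor_mul₁₂ G (𝟙⊗(𝟙⊗η₁) (σ⁻¹₁₂ (η₁ x)))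
  rwa [lTensor_congr₂₀ mul₁₂_lTensor_unit, act₁₂_lTensor_lTensor, σ₁₂_σInv₁₂,
    ← unit_apply (𝟙⊗η₁) x, ← unit_apply, mul₁₂_unit, eq_comm] at h

theorem lTensor_τInv₁₂_comul₁ (x : A ⊗[ℂ] (A ⊗[ℂ] M)) :
    𝟙⊗τ⁻¹₁₂ (φ₁ x) = σ₁₂ (𝟙⊗φ₁ (σ⁻¹₁₂ x)) := by
  have h := congrArg (𝟙⊗(𝟙⊗(𝟙⊗ε₁))) (σ₁₂_lTensor_comul₁_σInv₁₂_lTensor_comul₁ G x)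
  rw [← act₁₂_lTensor_lTensor, ← lTensor_congr₂₂ (comul₁_lTensor _ _), ← act₁₂_lTensor_lTensor,
    lTensor_congr₂₀ (lTensor_counit₁_comul₁ G),
    lTensor_congr₄₁ fun y => (τInv₁₂_apply G y).symm] at h
  exact h.symm

theorem σ₁₂_lTensor_comul₁ (x : A ⊗[ℂ] (A ⊗[ℂ] M)) :
    σ₁₂ (𝟙⊗φ₁ x) = 𝟙⊗τ⁻¹₁₂ (φ₁ (σ₁₂ x)) := by
  rw [lTensor_τInv₁₂_comul₁, σInv₁₂_σ₁₂]

theorem τInv₁₂_lTensor_comul₁ (x : A ⊗[ℂ] (A ⊗[ℂ] M)) :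
    τ⁻¹₁₂ (𝟙⊗φ₁ x) = 𝟙⊗σ₁₂ (φ₁ (σ⁻¹₁₂ x)) := by
  have h := congrArg ε₁ (σ₁₂_lTensor_comul₁_σInv₁₂_lTensor_comul₁ G x)
  rwa [← lTensor_τInv₁₂_comul₁, counit₁_lTensor, counit₁_comul₁, counit₁_lTensor, counit₁_lTensor,
    counit₁_lTensor, counit₁_comul₁] at h

theorem lTensor_σ₁₂_comul₁ (x : A ⊗[ℂ] (A ⊗[ℂ] M)) :
    𝟙⊗σ₁₂ (φ₁ x) = τ⁻¹₁₂ (𝟙⊗φ₁ (σ₁₂ x)) := by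
  rw [τInv₁₂_lTensor_comul₁, σInv₁₂_σ₁₂]

theorem lTensor_comul₁_τInv₁₂ (x : A ⊗[ℂ] (A ⊗[ℂ] M)) :
    𝟙⊗φ₁ (τ⁻¹₁₂ x) = τ⁻¹₁₂ (𝟙⊗τ⁻¹₁₂ (φ₁ x)) := by
  have h : 𝟙⊗(𝟙⊗φ₁) (𝟙⊗τ⁻¹₁₂ (φ₁ x)) = 𝟙⊗τ⁻¹₁₂ (φ₁ (𝟙⊗τ⁻¹₁₂ (φ₁ x))) := by
    rw [lTensor_τInv₁₂_comul₁, ← act₁₂_lTensor_lTensor, ← lTensor_congr₂₂ (comul₁_comul₁ G),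
      σ₁₂_lTensor_comul₁]
  have h := congrArg ε₁ h
  rwa [counit₁_lTensor, counit₁_lTensor, counit₁_comul₁, counit₁_lTensor, counit₁_comul₁] at h

theorem comul₁_τInv₁₂ (x : A ⊗[ℂ] (A ⊗[ℂ] M)) :
    φ₁ (τ⁻¹₁₂ x) = 𝟙⊗τ⁻¹₁₂ (τ⁻¹₁₂ (𝟙⊗φ₁ x)) := by
  have h : φ₁ (τ⁻¹₁₂ (𝟙⊗φ₁ x)) = 𝟙⊗τ⁻¹₁₂ (𝟙⊗(𝟙⊗φ₁) (τ⁻¹₁₂ (𝟙⊗φ₁ x))) := by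
    rw [τInv₁₂_lTensor_comul₁, comul₁_lTensor, comul₁_comul₁,
      lTensor_congr₂₂ (g₁ := 𝟙⊗φ₁ ∘ₗ σ₁₂) (lTensor_σ₁₂_comul₁ G), lTensor_comp_apply]
  have h := congrArg (𝟙⊗(𝟙⊗(𝟙⊗ε₁))) h
  rwa [← comul₁_lTensor, ← act₁₂_lTensor_lTensor, lTensor_congr₂₀ (lTensor_counit₁_comul₁ G),
    ← lTensor_congr₂₂ (act₁₂_lTensor_lTensor _ _),
    lTensor_congr₂₀ (lTensor_congr₂₀ (lTensor_counit₁_comul₁ G))] at h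

/-! ### Multiplicativity of the counit -/

theorem eq_mul₁₂_antipode_of_mul₁₂_comul₁ {f g : A ⊗[ℂ] M →ₗ[ℂ] A ⊗[ℂ] N}
    (h : ∀ x, m₁₂ (𝟙⊗f (φ₁ x)) = g x) (x : A ⊗[ℂ] M) : f x = m₁₂ (κ₁ (𝟙⊗g (φ₁ x))) := by
  rw [← lTensor_congr₃₁ h, ← comul₁_comul₁, rTensor_lTensor_comm, rTensor_lTensor_comm,
    ← mul₁₂_mul₁₂, mul₁₂_lTensor_lTensor, mul₁₂_antipode_comul₁, counit₁_comul₁, ← unit_apply,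
    mul₁₂_unit]

theorem lTensor_counit₁_mul₁₂_σ₁₂_comul₁ (x : A ⊗[ℂ] (A ⊗[ℂ] M)) :
    𝟙⊗ε₁ (𝟙⊗m₁₂ (σ₁₂ (𝟙⊗φ₁ x))) = ε₁ x := by
  have h (x : A ⊗[ℂ] (A ⊗[ℂ] M)) :
      m₁₂ (𝟙⊗(𝟙⊗ε₁ ∘ₗ 𝟙⊗m₁₂ ∘ₗ σ₁₂ ∘ₗ 𝟙⊗φ₁) (φ₁ x)) = m₁₂ x := by
    have h := congrArg (𝟙⊗ε₁) (comul₁_mul₁₂ G x)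
    rw [lTensor_counit₁_comul₁, ← mul₁₂_lTensor_lTensor, comul₁_lTensor] at h
    simpa only [lTensor_comp_apply] using h.symm
  have h := eq_mul₁₂_antipode_of_mul₁₂_comul₁ G h x
  rwa [rTensor_lTensor_comm, ← mul₁₂_mul₁₂, mul₁₂_antipode_comul₁, mul₁₂_unit] at h

theorem counit₁_unit (x : A ⊗[ℂ] M) : ε₁ (η₁ x) = x := by
  have h := lTensor_counit₁_mul₁₂_σ₁₂_comul₁ G (η₁ x)
  rwa [← unit_apply, σ₁₂_unit, lTensor_congr₂₀ mul₁₂_unit, lTensor_counit₁_comul₁, eq_comm] at h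

/-- The canonical (Galois) map `a ⊗ b ↦ a b⁽¹⁾ ⊗ b⁽²⁾`, whose invertibility encodes the
antipode. -/
def galoisMap : A ⊗[ℂ] (A ⊗[ℂ] M) →ₗ[ℂ] A ⊗[ℂ] (A ⊗[ℂ] M) := m₁₂ ∘ₗ 𝟙⊗φ₁

theorem galoisMap_apply (x : A ⊗[ℂ] (A ⊗[ℂ] M)) : galoisMap G x = m₁₂ (𝟙⊗φ₁ x) := rfl

theorem mul₁₂_lTensor_antipode_galoisMap (x : A ⊗[ℂ] (A ⊗[ℂ] M)) :
    m₁₂ (𝟙⊗κ₁ (galoisMap G x)) = 𝟙⊗ε₁ x := by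
  rw [galoisMap_apply, ← mul₁₂_lTensor_lTensor, mul₁₂_mul₁₂,
    lTensor_congr₃₂ (mul₁₂_lTensor_antipode_comul₁ G), mul₁₂_lTensor_unit]

theorem lTensor_comul₁_galoisMap (x : A ⊗[ℂ] (A ⊗[ℂ] M)) :
    𝟙⊗φ₁ (galoisMap G x) = galoisMap G (𝟙⊗φ₁ x) := by
  rw [galoisMap_apply, galoisMap_apply, ← mul₁₂_lTensor_lTensor, lTensor_congr₂₂ (comul₁_comul₁ G)]

theorem mul₁₂_lTensor_antipode_comul₁_galoisMap (x : A ⊗[ℂ] (A ⊗[ℂ] M)) :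
    m₁₂ (𝟙⊗κ₁ (𝟙⊗φ₁ (galoisMap G x))) = x := by
  rw [lTensor_comul₁_galoisMap, mul₁₂_lTensor_antipode_galoisMap,
    lTensor_congr₂₀ (counit₁_comul₁ G)]

theorem galoisMap_mul₁₂_lTensor_antipode_comul₁ (x : A ⊗[ℂ] (A ⊗[ℂ] M)) :
    galoisMap G (m₁₂ (𝟙⊗κ₁ (𝟙⊗φ₁ x))) = x := by
  rw [galoisMap_apply, ← mul₁₂_lTensor_lTensor, ← lTensor_congr₂₂ (rTensor_lTensor_comm _ _),
    ← lTensor_congr₂₂ (comul₁_comul₁ G), mul₁₂_mul₁₂, lTensor_congr₃₂ (mul₁₂_antipode_comul₁ G),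
    lTensor_congr₂₀ (counit₁_comul₁ G), mul₁₂_lTensor_unit]

theorem counit₁_mul₁₂_σ₁₂_comul₁ (x : A ⊗[ℂ] (A ⊗[ℂ] M)) :
    ε₁ (m₁₂ (𝟙⊗σ₁₂ (φ₁ x))) = 𝟙⊗ε₁ x := by
  have h : m₁₂ (ε₁ (m₁₂ (𝟙⊗σ₁₂ (φ₁ (𝟙⊗φ₁ (𝟙⊗φ₁ x)))))) = m₁₂ (𝟙⊗φ₁ x) := by
    have h := congrArg ε₁ (comul₁_mul₁₂ G (𝟙⊗φ₁ x))
    rwa [counit₁_comul₁, mul₁₂_lTensor_lTensor, counit₁_lTensor, eq_comm] at h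
  have h := congrArg (fun y => m₁₂ (𝟙⊗κ₁ y)) h
  rw [lTensor_congr₂₂ (comul₁_comul₁ G), comul₁_lTensor,
    lTensor_congr₂₂ (act₁₂_lTensor_lTensor _ _), mul₁₂_lTensor_lTensor, counit₁_lTensor] at h
  simp only [← galoisMap_apply, mul₁₂_lTensor_antipode_galoisMap] at h
  rwa [← counit₁_lTensor, ← mul₁₂_lTensor_lTensor, ← lTensor_congr₂₂ (act₁₂_lTensor_lTensor _ _),
    ← comul₁_lTensor, lTensor_congr₂₀ (lTensor_counit₁_comul₁ G)] at h

/-! ### Invertibility of the secondary braiding -/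

theorem lTensor_τInv₁₂_galoisMap_lTensor_σ₁₂ (x : A ⊗[ℂ] (A ⊗[ℂ] (A ⊗[ℂ] M))) :
    𝟙⊗τ⁻¹₁₂ (galoisMap G (𝟙⊗σ₁₂ x)) = σ₁₂ (𝟙⊗(galoisMap G) (σ⁻¹₁₂ x)) :=
  calc 𝟙⊗τ⁻¹₁₂ (galoisMap G (𝟙⊗σ₁₂ x))
    _ = m₁₂ (𝟙⊗(𝟙⊗τ⁻¹₁₂) (𝟙⊗φ₁ (𝟙⊗σ₁₂ x))) := (mul₁₂_lTensor_lTensor _ _).symm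
    _ = m₁₂ (𝟙⊗σ₁₂ (𝟙⊗(𝟙⊗φ₁) x)) := by
      rw [lTensor_congr₃₂ fun y => (σ₁₂_lTensor_comul₁ G y).symm]
    _ = σ₁₂ (𝟙⊗m₁₂ (𝟙⊗(𝟙⊗φ₁) (σ⁻¹₁₂ x))) := by
      rw [← act₁₂_lTensor_lTensor, σ₁₂_lTensor_mul₁₂, σ₁₂_σInv₁₂]
    _ = σ₁₂ (𝟙⊗(galoisMap G) (σ⁻¹₁₂ x)) := by rw [← lTensor_comp_apply, galoisMap]

theorem lTensor_τInv₁₂_injective :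
    Function.Injective (𝟙⊗τ⁻¹₁₂ : A ⊗[ℂ] (A ⊗[ℂ] (A ⊗[ℂ] M)) →ₗ[ℂ] _) := by
  have hσ := Function.LeftInverse.injective (σInv₁₂_σ₁₂ (M := A ⊗[ℂ] M) G)
  have hσ' := Function.LeftInverse.injective (σ₁₂_σInv₁₂ (M := A ⊗[ℂ] M) G)
  have hg : Function.LeftInverse (𝟙⊗(m₁₂ ∘ₗ 𝟙⊗κ₁ ∘ₗ 𝟙⊗φ₁)) (𝟙⊗(galoisMap (M := M) G)) :=
    lTensor_congr₂₀ (mul₁₂_lTensor_antipode_comul₁_galoisMap G)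
  have surj : Function.Surjective fun x => galoisMap (M := A ⊗[ℂ] M) G (𝟙⊗σ₁₂ x) :=
    (Function.RightInverse.surjective (galoisMap_mul₁₂_lTensor_antipode_comul₁ G)).comp
      (Function.RightInverse.surjective (lTensor_congr₂₀ (σ₁₂_σInv₁₂ G)))
  refine Function.Injective.of_comp_right ?_ surj
  simpa only [Function.comp_def, lTensor_τInv₁₂_galoisMap_lTensor_σ₁₂] using
    hσ.comp (hg.injective.comp hσ')

theorem τInv₁₂_injective :
    Function.Injective (τ⁻¹₁₂ : A ⊗[ℂ] (A ⊗[ℂ] M) →ₗ[ℂ] _) := fun x y h => by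
  have h : η₁ x = η₁ y := lTensor_τInv₁₂_injective G (congrArg η₁ h)
  rw [← counit₁_unit G x, h, counit₁_unit]

theorem counit₁_mul₁₂_τInv₁₂ (x : A ⊗[ℂ] (A ⊗[ℂ] M)) :
    ε₁ (m₁₂ (τ⁻¹₁₂ x)) = ε₁ (ε₁ (σ⁻¹₁₂ x)) := by
  have h : ε₁ (m₁₂ (τ⁻¹₁₂ (𝟙⊗φ₁ x))) = 𝟙⊗ε₁ (σ⁻¹₁₂ x) := by
    rw [τInv₁₂_lTensor_comul₁, counit₁_mul₁₂_σ₁₂_comul₁]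
  have h := congrArg ε₁ h
  rwa [counit₁_lTensor, ← counit₁_lTensor, ← counit₁_lTensor, ← mul₁₂_lTensor_lTensor,
    ← act₁₂_lTensor_lTensor, lTensor_congr₂₀ (lTensor_counit₁_comul₁ G), counit₁_lTensor] at h

theorem lTensor_counit₁_mul₁₂_comul₁_τInv₁₂ (x : A ⊗[ℂ] (A ⊗[ℂ] M)) :
    𝟙⊗ε₁ (𝟙⊗m₁₂ (φ₁ (τ⁻¹₁₂ x))) = 𝟙⊗ε₁ (σ⁻¹₁₂ x) :=
  calc 𝟙⊗ε₁ (𝟙⊗m₁₂ (φ₁ (τ⁻¹₁₂ x)))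
    _ = 𝟙⊗ε₁ (𝟙⊗ε₁ (𝟙⊗σ⁻¹₁₂ (τ⁻¹₁₂ (𝟙⊗φ₁ x)))) := by
      rw [comul₁_τInv₁₂, lTensor_congr₃₁ (g := ε₁ ∘ₗ ε₁ ∘ₗ σ⁻¹₁₂) (counit₁_mul₁₂_τInv₁₂ G)]
      simp only [lTensor_comp_apply]
    _ = 𝟙⊗ε₁ (𝟙⊗ε₁ (φ₁ (σ⁻¹₁₂ x))) := by
      rw [τInv₁₂_lTensor_comul₁, lTensor_congr₂₀ (σInv₁₂_σ₁₂ G)]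
    _ = 𝟙⊗ε₁ (σ⁻¹₁₂ x) := by rw [lTensor_counit₁_comul₁]

theorem counit₁_galoisMap_τInv₁₂ (x : A ⊗[ℂ] (A ⊗[ℂ] M)) :
    ε₁ (galoisMap G (τ⁻¹₁₂ x)) = ε₁ (σ⁻¹₁₂ x) := by
  rw [galoisMap_apply, lTensor_comul₁_τInv₁₂, counit₁_mul₁₂_τInv₁₂, lTensor_τInv₁₂_comul₁,
    σInv₁₂_σ₁₂, counit₁_lTensor, counit₁_comul₁]

theorem τInv₁₂_τ₁₂ (x : A ⊗[ℂ] (A ⊗[ℂ] M)) : τ⁻¹₁₂ (τ₁₂ x) = x :=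
  calc τ⁻¹₁₂ (τ₁₂ x)
    _ = τ⁻¹₁₂ (𝟙⊗(𝟙⊗ε₁) (𝟙⊗(𝟙⊗m₁₂) (𝟙⊗φ₁ (𝟙⊗τ⁻¹₁₂ (φ₁ (σ₁₂ x)))))) := by
      rw [τ₁₂_apply, lTensor_congr₄₂ (lTensor_counit₁_mul₁₂_comul₁_τInv₁₂ G)]
    _ = τ⁻¹₁₂ (𝟙⊗(𝟙⊗ε₁) (𝟙⊗(𝟙⊗m₁₂) (𝟙⊗φ₁ (σ₁₂ (𝟙⊗φ₁ x))))) := by rw [σ₁₂_lTensor_comul₁]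
    _ = 𝟙⊗(𝟙⊗ε₁) (𝟙⊗(𝟙⊗m₁₂) (𝟙⊗σ₁₂ (φ₁ (𝟙⊗φ₁ x)))) := by
      rw [act₁₂_lTensor_lTensor, act₁₂_lTensor_lTensor, lTensor_σ₁₂_comul₁]
    _ = 𝟙⊗ε₁ (φ₁ x) := by
      rw [comul₁_lTensor, lTensor_congr₄₁ (lTensor_counit₁_mul₁₂_σ₁₂_comul₁ G)]
    _ = x := lTensor_counit₁_comul₁ G x

theorem τ₁₂_τInv₁₂ (x : A ⊗[ℂ] (A ⊗[ℂ] M)) : τ₁₂ (τ⁻¹₁₂ x) = x :=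
  τInv₁₂_injective G (τInv₁₂_τ₁₂ G _)

theorem counit₁_σInv₁₂_lTensor_comul₁ (x : A ⊗[ℂ] (A ⊗[ℂ] M)) :
    ε₁ (σ⁻¹₁₂ (𝟙⊗φ₁ (σ₁₂ x))) = τ₁₂ x := by
  refine τInv₁₂_injective G (Eq.trans ?_ (τInv₁₂_τ₁₂ G x).symm)
  calc τ⁻¹₁₂ (ε₁ (σ⁻¹₁₂ (𝟙⊗φ₁ (σ₁₂ x))))
    _ = τ⁻¹₁₂ (ε₁ (m₁₂ (𝟙⊗φ₁ (𝟙⊗σ₁₂ (φ₁ x))))) := by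
      rw [← counit₁_galoisMap_τInv₁₂, ← lTensor_σ₁₂_comul₁, galoisMap_apply]
    _ = ε₁ (m₁₂ (𝟙⊗σ₁₂ (φ₁ (𝟙⊗φ₁ x)))) := by
      rw [← counit₁_lTensor, ← mul₁₂_lTensor_lTensor,
        lTensor_congr₃₂ fun y => (σ₁₂_lTensor_comul₁ G y).symm, comul₁_lTensor]
    _ = x := by rw [counit₁_mul₁₂_σ₁₂_comul₁, lTensor_congr₂₀ (counit₁_comul₁ G)]

theorem comul₁_τ₁₂ (x : A ⊗[ℂ] (A ⊗[ℂ] M)) : φ₁ (τ₁₂ x) = 𝟙⊗τ₁₂ (τ₁₂ (𝟙⊗φ₁ x)) := by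
  conv_rhs => rw [← τInv₁₂_τ₁₂ G x, lTensor_comul₁_τInv₁₂, τ₁₂_τInv₁₂,
    lTensor_congr₂₀ (τ₁₂_τInv₁₂ G)]

theorem lTensor_comul₁_τ₁₂ (x : A ⊗[ℂ] (A ⊗[ℂ] M)) : 𝟙⊗φ₁ (τ₁₂ x) = τ₁₂ (𝟙⊗τ₁₂ (φ₁ x)) := by
  conv_rhs => rw [← τInv₁₂_τ₁₂ G x, comul₁_τInv₁₂, lTensor_congr₂₀ (τ₁₂_τInv₁₂ G), τ₁₂_τInv₁₂]

theorem comul₁_σInv₁₂_τ₁₂ (x : A ⊗[ℂ] (A ⊗[ℂ] M)) :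
    φ₁ (σ⁻¹₁₂ (τ₁₂ x)) = 𝟙⊗σ⁻¹₁₂ (𝟙⊗τ₁₂ (φ₁ x)) := by
  have h := τInv₁₂_lTensor_comul₁ G (τ₁₂ x)
  rw [lTensor_comul₁_τ₁₂, τInv₁₂_τ₁₂] at h
  rw [h, lTensor_congr₂₀ (σInv₁₂_σ₁₂ G)]

theorem lTensor_comul₁_σInv₁₂_τ₁₂ (x : A ⊗[ℂ] (A ⊗[ℂ] M)) :
    𝟙⊗φ₁ (σ⁻¹₁₂ (τ₁₂ x)) = σ⁻¹₁₂ (τ₁₂ (𝟙⊗φ₁ x)) := by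
  have h := lTensor_τInv₁₂_comul₁ G (τ₁₂ x)
  rw [comul₁_τ₁₂, lTensor_congr₂₀ (τInv₁₂_τ₁₂ G)] at h
  rw [h, σInv₁₂_σ₁₂]

theorem τ₁₂_σInv₁₂_τ₁₂_lTensor_comul₁ (x : A ⊗[ℂ] (A ⊗[ℂ] M)) :
    τ₁₂ (σ⁻¹₁₂ (τ₁₂ (𝟙⊗φ₁ x))) = 𝟙⊗τ⁻¹₁₂ (φ₁ (τ₁₂ (σ⁻¹₁₂ (τ₁₂ x)))) := by
  rw [comul₁_τ₁₂, lTensor_comul₁_σInv₁₂_τ₁₂, lTensor_congr₂₀ (τInv₁₂_τ₁₂ G)]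

theorem lTensor_τ₁₂_σInv₁₂_τ₁₂_comul₁ (x : A ⊗[ℂ] (A ⊗[ℂ] M)) :
    𝟙⊗τ₁₂ (𝟙⊗σ⁻¹₁₂ (𝟙⊗τ₁₂ (φ₁ x))) = τ⁻¹₁₂ (𝟙⊗φ₁ (τ₁₂ (σ⁻¹₁₂ (τ₁₂ x)))) := by
  rw [lTensor_comul₁_τ₁₂, comul₁_σInv₁₂_τ₁₂, τInv₁₂_τ₁₂]

/-! ### The antipode twisting relations -/

theorem σ₁₂_lTensor_antipode_τInv₁₂_σ₁₂ (x : A ⊗[ℂ] (A ⊗[ℂ] M)) :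
    σ₁₂ (𝟙⊗κ₁ (τ⁻¹₁₂ (σ₁₂ x))) = κ₁ (τ₁₂ x) := by
  have h (y : A ⊗[ℂ] (A ⊗[ℂ] M)) :
      m₁₂ (𝟙⊗(σ₁₂ ∘ₗ 𝟙⊗κ₁ ∘ₗ τ⁻¹₁₂) (φ₁ y)) = (η₁ ∘ₗ 𝟙⊗ε₁ ∘ₗ σ⁻¹₁₂) y := by
    obtain ⟨x, rfl⟩ : ∃ x, σ₁₂ x = y := ⟨_, σ₁₂_σInv₁₂ G y⟩
    simp only [lTensor_comp_apply, comp_apply, σInv₁₂_σ₁₂]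
    calc m₁₂ (𝟙⊗σ₁₂ (𝟙⊗(𝟙⊗κ₁) (𝟙⊗τ⁻¹₁₂ (φ₁ (σ₁₂ x)))))
      _ = m₁₂ (𝟙⊗σ₁₂ (σ₁₂ (𝟙⊗(𝟙⊗κ₁) (𝟙⊗φ₁ x)))) := by
        rw [← σ₁₂_lTensor_comul₁, act₁₂_lTensor_lTensor]
      _ = σ₁₂ (𝟙⊗η₁ (𝟙⊗ε₁ x)) := by
        rw [← σ₁₂_lTensor_mul₁₂, lTensor_congr₃₂ (mul₁₂_lTensor_antipode_comul₁ G)]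
      _ = η₁ (𝟙⊗ε₁ x) := σ₁₂_lTensor_unit G _
  calc σ₁₂ (𝟙⊗κ₁ (τ⁻¹₁₂ (σ₁₂ x)))
    _ = m₁₂ (κ₁ (𝟙⊗(η₁ ∘ₗ 𝟙⊗ε₁ ∘ₗ σ⁻¹₁₂) (φ₁ (σ₁₂ x)))) :=
      eq_mul₁₂_antipode_of_mul₁₂_comul₁ G h _
    _ = κ₁ (𝟙⊗(𝟙⊗ε₁) (𝟙⊗σ⁻¹₁₂ (φ₁ (σ₁₂ x)))) := by
      rw [rTensor_lTensor_comm, lTensor_comp_apply, mul₁₂_lTensor_unit, lTensor_comp_apply,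
        ← rTensor_lTensor_comm, ← rTensor_lTensor_comm]
    _ = κ₁ (τ₁₂ x) := by rw [τ₁₂_apply]

theorem σ₁₂_antipode_τInv₁₂_σ₁₂ (x : A ⊗[ℂ] (A ⊗[ℂ] M)) :
    σ₁₂ (κ₁ (τ⁻¹₁₂ (σ₁₂ x))) = 𝟙⊗κ₁ (τ₁₂ x) := by
  have h (y : A ⊗[ℂ] (A ⊗[ℂ] (A ⊗[ℂ] M))) :
      𝟙⊗m₁₂ (σ₁₂ (κ₁ (τ⁻¹₁₂ (𝟙⊗φ₁ (σ₁₂ y))))) = 𝟙⊗η₁ (ε₁ y) := by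
    rw [← lTensor_σ₁₂_comul₁, rTensor_lTensor_comm, ← σ₁₂_mul₁₂, mul₁₂_antipode_comul₁, σ₁₂_unit]
  calc σ₁₂ (κ₁ (τ⁻¹₁₂ (σ₁₂ x)))
    _ = 𝟙⊗(𝟙⊗ε₁) (σ₁₂ (κ₁ (τ⁻¹₁₂ (𝟙⊗φ₁ (σ₁₂ x))))) := by
      rw [← act₁₂_lTensor_lTensor, ← rTensor_lTensor_comm, ← act₁₂_lTensor_lTensor,
        lTensor_congr₂₀ (lTensor_counit₁_comul₁ G)]
    _ = 𝟙⊗m₁₂ (𝟙⊗(𝟙⊗κ₁) (𝟙⊗(galoisMap G) (σ₁₂ (κ₁ (τ⁻¹₁₂ (𝟙⊗φ₁ (σ₁₂ x))))))) := by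
      rw [lTensor_congr₃₁ (mul₁₂_lTensor_antipode_galoisMap G)]
    _ = 𝟙⊗m₁₂ (𝟙⊗(𝟙⊗κ₁) (𝟙⊗m₁₂ (σ₁₂ (κ₁ (τ⁻¹₁₂ (𝟙⊗φ₁ (𝟙⊗φ₁ (σ₁₂ x)))))))) := by
      rw [galoisMap, lTensor_comp_apply, lTensor_congr₂₂ (comul₁_comul₁ G), act₁₂_lTensor_lTensor,
        rTensor_lTensor_comm, act₁₂_lTensor_lTensor]
    _ = 𝟙⊗m₁₂ (𝟙⊗(𝟙⊗κ₁) (𝟙⊗η₁ (τ₁₂ x))) := by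
      rw [← counit₁_σInv₁₂_lTensor_comul₁, ← h, σ₁₂_σInv₁₂]
    _ = 𝟙⊗κ₁ (τ₁₂ x) := lTensor_congr₃₁ (fun y => by rw [← unit_apply, mul₁₂_unit]) _

theorem σ₁₂_lTensor_antipode (x : A ⊗[ℂ] (A ⊗[ℂ] M)) :
    σ₁₂ (𝟙⊗κ₁ x) = κ₁ (τ₁₂ (σ⁻¹₁₂ (τ₁₂ x))) := by
  rw [← σ₁₂_lTensor_antipode_τInv₁₂_σ₁₂, σ₁₂_σInv₁₂, τInv₁₂_τ₁₂]

theorem σ₁₂_antipode (x : A ⊗[ℂ] (A ⊗[ℂ] M)) :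
    σ₁₂ (κ₁ x) = 𝟙⊗κ₁ (τ₁₂ (σ⁻¹₁₂ (τ₁₂ x))) := by
  rw [← σ₁₂_antipode_τInv₁₂_σ₁₂, σ₁₂_σInv₁₂, τInv₁₂_τ₁₂]

theorem τ₁₂_σInv₁₂_τ₁₂_surjective :
    Function.Surjective fun x : A ⊗[ℂ] (A ⊗[ℂ] M) => τ₁₂ (σ⁻¹₁₂ (τ₁₂ x)) := fun y =>
  ⟨τ⁻¹₁₂ (σ₁₂ (τ⁻¹₁₂ y)), by simp only [τ₁₂_τInv₁₂, σInv₁₂_σ₁₂]⟩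

theorem τInv₁₂_lTensor_antipode (x : A ⊗[ℂ] (A ⊗[ℂ] M)) :
    τ⁻¹₁₂ (𝟙⊗κ₁ x) = κ₁ (τ⁻¹₁₂ x) := by
  obtain ⟨y, rfl⟩ := τ₁₂_σInv₁₂_τ₁₂_surjective G x
  have h := congrArg ε₁ (σ₁₂_lTensor_comul₁ G (κ₁ y))
  rw [← rTensor_lTensor_comm, σ₁₂_antipode, σ₁₂_antipode, τ₁₂_σInv₁₂_τ₁₂_lTensor_comul₁,
    comul₁_lTensor] at h
  simpa only [counit₁_lTensor, counit₁_comul₁] using h.symm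

theorem τInv₁₂_antipode (x : A ⊗[ℂ] (A ⊗[ℂ] M)) : τ⁻¹₁₂ (κ₁ x) = 𝟙⊗κ₁ (τ⁻¹₁₂ x) := by
  obtain ⟨y, rfl⟩ := τ₁₂_σInv₁₂_τ₁₂_surjective G x
  set θy := τ₁₂ (σ⁻¹₁₂ (τ₁₂ y))
  have h : τ⁻¹₁₂ (κ₁ (𝟙⊗φ₁ θy)) = 𝟙⊗κ₁ (τ⁻¹₁₂ (𝟙⊗φ₁ θy)) :=
    calc τ⁻¹₁₂ (κ₁ (𝟙⊗φ₁ θy))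
      _ = 𝟙⊗σ₁₂ (φ₁ (𝟙⊗κ₁ y)) := by
        rw [lTensor_σ₁₂_comul₁, σ₁₂_lTensor_antipode, rTensor_lTensor_comm]
      _ = 𝟙⊗κ₁ (𝟙⊗τ₁₂ (𝟙⊗σ⁻¹₁₂ (𝟙⊗τ₁₂ (φ₁ y)))) := by
        rw [comul₁_lTensor, lTensor_congr₂₂ (g₁ := τ₁₂ ∘ₗ σ⁻¹₁₂ ∘ₗ τ₁₂) (σ₁₂_lTensor_antipode G)]
        simp only [lTensor_comp_apply]
      _ = 𝟙⊗κ₁ (τ⁻¹₁₂ (𝟙⊗φ₁ θy)) := by rw [lTensor_τ₁₂_σInv₁₂_τ₁₂_comul₁]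
  have h := congrArg (𝟙⊗(𝟙⊗ε₁)) h
  rwa [← act₁₂_lTensor_lTensor, ← rTensor_lTensor_comm,
    ← lTensor_congr₂₂ (rTensor_lTensor_comm _ _), ← act₁₂_lTensor_lTensor,
    lTensor_congr₂₀ (lTensor_counit₁_comul₁ G)] at h

theorem τ₁₂_antipode (x : A ⊗[ℂ] (A ⊗[ℂ] M)) : τ₁₂ (κ₁ x) = 𝟙⊗κ₁ (τ₁₂ x) :=
  τInv₁₂_injective G (by rw [τInv₁₂_lTensor_antipode, τInv₁₂_τ₁₂, τInv₁₂_τ₁₂])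

theorem τ₁₂_lTensor_antipode (x : A ⊗[ℂ] (A ⊗[ℂ] M)) : τ₁₂ (𝟙⊗κ₁ x) = κ₁ (τ₁₂ x) :=
  τInv₁₂_injective G (by rw [τInv₁₂_antipode, τInv₁₂_τ₁₂, τInv₁₂_τ₁₂])

theorem antipode_lTensor_antipode_τ₁₂ (x : A ⊗[ℂ] (A ⊗[ℂ] M)) :
    κ₁ (𝟙⊗κ₁ (τ₁₂ x)) = τ₁₂ (κ₁ (𝟙⊗κ₁ x)) := by
  rw [τ₁₂_antipode, τ₁₂_lTensor_antipode, rTensor_lTensor_comm]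

theorem antipode_lTensor_antipode_σ₁₂ (x : A ⊗[ℂ] (A ⊗[ℂ] M)) :
    κ₁ (𝟙⊗κ₁ (σ₁₂ x)) = σ₁₂ (κ₁ (𝟙⊗κ₁ x)) := by
  symm
  calc σ₁₂ (κ₁ (𝟙⊗κ₁ x))
    _ = 𝟙⊗κ₁ (τ₁₂ (σ⁻¹₁₂ (κ₁ (τ₁₂ x)))) := by rw [σ₁₂_antipode, τ₁₂_lTensor_antipode]
    _ = 𝟙⊗κ₁ (τ₁₂ (𝟙⊗κ₁ (τ⁻¹₁₂ (σ₁₂ x)))) := by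
      rw [← σ₁₂_lTensor_antipode_τInv₁₂_σ₁₂, σInv₁₂_σ₁₂]
    _ = κ₁ (𝟙⊗κ₁ (σ₁₂ x)) := by
      rw [τ₁₂_lTensor_antipode, τ₁₂_τInv₁₂, rTensor_lTensor_comm]

/-! ### Removing the tail -/

local notation "ι" => LinearMap.lTensor _ (appendTail (1 : ℂ))

theorem ext_lTensor_appendTail_one {f g : T2 A →ₗ[ℂ] T2 A} (h : ∀ t, ι (f t) = ι (g t)) :
    f = g := by
  have rid_ι (t : T2 A) : 𝟙⊗(TensorProduct.rid ℂ A).toLinearMap (ι t) = t :=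
    lTensor_congr₂₀ (fun a => by simp) t
  refine LinearMap.ext fun t => ?_
  rw [← rid_ι (f t), h, rid_ι]

end BQG

/-- Antipode twisting relations: `σ(κ⊗id) = (id⊗κ)τσ⁻¹τ`, `σ(id⊗κ) = (κ⊗id)τσ⁻¹τ`,
`τ(id⊗κ) = (κ⊗id)τ`, `τ(κ⊗id) = (id⊗κ)τ`, and consequently
`(κ⊗κ)τ = τ(κ⊗κ)` and `(κ⊗κ)σ = σ(κ⊗κ)`. -/
theorem bqg_antipode_twisting {A : Type*} [Ring A] [Algebra ℂ A] (G : BQG A) :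
    G.σ ∘ₗ G.κ.rTensor A = G.κ.lTensor A ∘ₗ G.τ ∘ₗ G.σ' ∘ₗ G.τ ∧
    G.σ ∘ₗ G.κ.lTensor A = G.κ.rTensor A ∘ₗ G.τ ∘ₗ G.σ' ∘ₗ G.τ ∧
    G.τ ∘ₗ G.κ.lTensor A = G.κ.rTensor A ∘ₗ G.τ ∧
    G.τ ∘ₗ G.κ.rTensor A = G.κ.lTensor A ∘ₗ G.τ ∧
    TensorProduct.map G.κ G.κ ∘ₗ G.τ = G.τ ∘ₗ TensorProduct.map G.κ G.κ ∧
    TensorProduct.map G.κ G.κ ∘ₗ G.σ = G.σ ∘ₗ TensorProduct.map G.κ G.κ := by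
  have map_κ_κ : TensorProduct.map G.κ G.κ = G.κ.rTensor A ∘ₗ G.κ.lTensor A :=
    (rTensor_comp_lTensor ..).symm
  let ι : T2 A →ₗ[ℂ] A ⊗[ℂ] (A ⊗[ℂ] ℂ) := (BQG.appendTail 1).lTensor A
  rw [map_κ_κ]
  refine ⟨?_, ?_, ?_, ?_, ?_, ?_⟩ <;> refine BQG.ext_lTensor_appendTail_one fun t => ?_
  · simpa only [ι, comp_apply, BQG.act₁₂_appendTail, BQG.antipode_lTensor_appendTail,
      BQG.lTensor_antipode_lTensor_appendTail] using G.σ₁₂_antipode (ι t)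
  · simpa only [ι, comp_apply, BQG.act₁₂_appendTail, BQG.antipode_lTensor_appendTail,
      BQG.lTensor_antipode_lTensor_appendTail] using G.σ₁₂_lTensor_antipode (ι t)
  · simpa only [ι, comp_apply, BQG.act₁₂_appendTail, BQG.antipode_lTensor_appendTail,
      BQG.lTensor_antipode_lTensor_appendTail] using G.τ₁₂_lTensor_antipode (ι t)
  · simpa only [ι, comp_apply, BQG.act₁₂_appendTail, BQG.antipode_lTensor_appendTail,
      BQG.lTensor_antipode_lTensor_appendTail] using G.τ₁₂_antipode (ι t)
  · simpa only [ι, comp_apply, BQG.act₁₂_appendTail, BQG.antipode_lTensor_appendTail,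
      BQG.lTensor_antipode_lTensor_appendTail] using G.antipode_lTensor_antipode_τ₁₂ (ι t)
  · simpa only [ι, comp_apply, BQG.act₁₂_appendTail, BQG.antipode_lTensor_appendTail,
      BQG.lTensor_antipode_lTensor_appendTail] using G.antipode_lTensor_antipode_σ₁₂ (ι t)
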